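/- The enriched transition matrix P̃, the MJMC transition matrix P, and the 0/1 matrix Ψ with rows indexed by S(H,K) and columns by St_{h,k} defined by Ψ_{σ,B} = 1 if ψ(σ) = B and 0 otherwise, satisfy the intertwining relation P̃ Ψ = Ψ P. -/

import Mathlib

/-! Both transition matrices are sums of deterministic moves, so it suffices that `ψ` commutes with
each move.  Removing `1` and shifting deletes the first letter of `ψ(σ)` and appends the letter of
`h + 1`, which is `∘` because `h + 1` is the maximum of its block in `σ` (`psiWord_head_tail`).
Adding the singleton `{h + 1}` does not affect the first `h` letters (`psiWord_insert`).  Inserting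
`h + 1` into the `(i+1)`-th block turns that block's maximum `m ≤ h` into a non-maximum; as the
maxima of the blocks are distinct and are precisely the positions of `∘`, the letter at `m` is the
`(i+1)`-th `∘`, so the effect on words is `T_i` (`psiWord_insertIntoBlock`).  Besides this one checks
that the moves preserve set partitions (`isSP_insert`, `isSP_insertIntoBlock`) and that `ψ(σ)` has
`k` letters `∘` (`count_psiWord`), so that the matrix products collapse to the expected terms. -/

/-- Replace the `(i+1)`-th occurrence of `false` (i.e. `∘`), 0-indexed `i`, reading
from the left, by `true` (i.e. `•`). -/
def fillAt : ℕ → List Bool → List Bool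
  | _, [] => []
  | i, true :: rest => true :: fillAt i rest
  | 0, false :: rest => true :: rest
  | (i+1), false :: rest => false :: fillAt i rest

/-- Transition probability of the MJMC, on words encoded as lists of booleans
(`true` = ball `•`, `false` = empty site `∘`).  From `A = a₁⋯a_h`: with probability 1
go to `a₂⋯a_h∘` if `a₁ = ∘`; with probability `x i` go to `T_i (a₂⋯a_h∘)` if `a₁ = •`. -/
noncomputable def mjmcP (k : ℕ) (x : ℕ → ℝ) : List Bool → List Bool → ℝ
  | [], B => if B = [] then 1 else 0
  | false :: rest, B => if B = rest ++ [false] then 1 else 0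
  | true :: rest, B =>
      ∑ i ∈ Finset.range (k + 1), if B = fillAt i (rest ++ [false]) then x i else 0

/-- Auxiliary weight: `e` records the number of `∘`'s seen so far, so that the factor
attached to a `•` at position `i` is `x_{E_i(B)} + ⋯ + x_k`. -/
noncomputable def wordWeightAux (k : ℕ) (x : ℕ → ℝ) : ℕ → List Bool → ℝ
  | _, [] => 1
  | e, false :: rest => wordWeightAux k x (e + 1) rest
  | e, true :: rest => (∑ j ∈ Finset.Icc e k, x j) * wordWeightAux k x e rest

/-- `w(B) = ∏_{i : b_i = •} (x_{E_i(B)} + ⋯ + x_k)` where `E_i(B) = #{j < i : b_j = ∘}`. -/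
noncomputable def wordWeight (k : ℕ) (x : ℕ → ℝ) (B : List Bool) : ℝ :=
  wordWeightAux k x 0 B

/-- The set `St_{h,k}` of words of length `h` with exactly `k` occurrences of `∘`. -/
def stWords (h k : ℕ) : Finset (Fin h → Bool) :=
  Finset.univ.filter (fun B => (List.ofFn B).count false = k)

/-- The normalization factor `Z_{h,k}(x_0,…,x_k) = ∑_{B ∈ St_{h,k}} w(B)`. -/
noncomputable def Zword (h k : ℕ) (x : ℕ → ℝ) : ℝ :=
  ∑ B ∈ stWords h k, wordWeight k x (List.ofFn B)

/-- `σ↓`: remove the element 1 from the set partition `σ` (deleting its block if it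
becomes empty) and shift all remaining elements down by 1. -/
def downShift (σ : Finset (Finset ℕ)) : Finset (Finset ℕ) :=
  (σ.image fun b => (b.erase 1).image (· - 1)).erase ∅

/-- `I_i(τ)`: insert the element `v` into the `(i+1)`-th block of `τ`, blocks being
numbered (from `i = 0`) in increasing order of their maxima. -/
def insertIntoBlock (v i : ℕ) (τ : Finset (Finset ℕ)) : Finset (Finset ℕ) :=
  τ.image fun b =>
    if (τ.filter fun c => c.sup id < b.sup id).card = i then insert v b else b

/-- Transition probability of the enriched chain on set partitions of `{1,…,h+1}`
into `k+1` blocks: if `{1}` is a block of `σ`, go to `σ↓ ∪ {{h+1}}` with probability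
1; otherwise go to `I_i(σ↓)` with probability `x i` for `0 ≤ i ≤ k`. -/
noncomputable def enrichedP (h k : ℕ) (x : ℕ → ℝ) (σ τ : Finset (Finset ℕ)) : ℝ :=
  if ({1} : Finset ℕ) ∈ σ then
    (if τ = insert ({h + 1} : Finset ℕ) (downShift σ) then 1 else 0)
  else
    ∑ i ∈ Finset.range (k + 1),
      if τ = insertIntoBlock (h + 1) i (downShift σ) then x i else 0

/-- `σ` is a partition of the set `{1,…,H}` into exactly `K` nonempty blocks. -/
def IsSP (H K : ℕ) (σ : Finset (Finset ℕ)) : Prop :=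
  (∀ b ∈ σ, b.Nonempty) ∧ (∀ b₁ ∈ σ, ∀ b₂ ∈ σ, b₁ ≠ b₂ → Disjoint b₁ b₂) ∧
    σ.sup id = Finset.Icc 1 H ∧ σ.card = K

instance (H K : ℕ) : DecidablePred (IsSP H K) := fun σ => by
  unfold IsSP; infer_instance

/-- The (finite) set `S(H,K)` of partitions of `{1,…,H}` into `K` nonempty blocks. -/
def spFinset (H K : ℕ) : Finset (Finset (Finset ℕ)) :=
  ((Finset.Icc 1 H).powerset.powerset).filter (IsSP H K)

/-- The letter at position `p+1` (for `p : ℕ`) of the word `ψ(σ)`: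
`∘` (= `false`) if `p+1` is the maximum of its block in `σ`, `•` (= `true`) otherwise. -/
def psiLetter (σ : Finset (Finset ℕ)) (p : ℕ) : Bool :=
  if ∃ b ∈ σ, b.sup id = p + 1 then false else true

/-- The word of the first `n` letters `psiLetter τ 0, …, psiLetter τ (n - 1)`, as a list. -/
def psiWord (n : ℕ) (τ : Finset (Finset ℕ)) : List Bool :=
  (List.range n).map (psiLetter τ)

/-! ### Set partitions and block maxima -/

/-- `IsSP` in terms of elements: disjointness says that a point lies in at most one block. -/
theorem isSP_iff {H K : ℕ} {σ : Finset (Finset ℕ)} :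
    IsSP H K σ ↔ (∀ b ∈ σ, b.Nonempty) ∧
      (∀ b₁ ∈ σ, ∀ b₂ ∈ σ, ∀ n, n ∈ b₁ → n ∈ b₂ → b₁ = b₂) ∧
      (∀ n, (∃ b ∈ σ, n ∈ b) ↔ 1 ≤ n ∧ n ≤ H) ∧ σ.card = K := by
  unfold IsSP
  refine and_congr Iff.rfl (and_congr ?_ (and_congr ?_ Iff.rfl))
  · constructor
    · intro h b₁ h₁ b₂ h₂ n hn₁ hn₂
      by_contra hne
      exact Finset.disjoint_left.1 (h b₁ h₁ b₂ h₂ hne) hn₁ hn₂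
    · intro h b₁ h₁ b₂ h₂ hne
      exact Finset.disjoint_left.2 fun n hn₁ hn₂ => hne (h b₁ h₁ b₂ h₂ n hn₁ hn₂)
  · rw [Finset.ext_iff]
    simp [Finset.mem_sup]

theorem mem_spFinset {H K : ℕ} {σ : Finset (Finset ℕ)} : σ ∈ spFinset H K ↔ IsSP H K σ := by
  unfold spFinset
  rw [Finset.mem_filter, and_iff_right_iff_imp]
  intro h
  rw [Finset.mem_powerset]
  intro b hb
  rw [Finset.mem_powerset, ← h.2.2.1]
  exact Finset.le_sup (f := id) hb

theorem sup_eq_succ_iff (b : Finset ℕ) (m : ℕ) :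
    b.sup id = m + 1 ↔ m + 1 ∈ b ∧ ∀ n ∈ b, n ≤ m + 1 := by
  constructor
  · intro h
    have hb : b.Nonempty := by
      rw [Finset.nonempty_iff_ne_empty]; rintro rfl; simp at h
    obtain ⟨n, hn, hs⟩ := Finset.exists_mem_eq_sup b hb id
    refine ⟨?_, fun n hn => h ▸ Finset.le_sup (f := id) hn⟩
    rw [← h, hs]; exact hn
  · rintro ⟨h₁, h₂⟩
    exact le_antisymm (Finset.sup_le h₂) (Finset.le_sup (f := id) h₁)

theorem psiLetter_eq_false {σ : Finset (Finset ℕ)} {p : ℕ} :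
    psiLetter σ p = false ↔ ∃ b ∈ σ, p + 1 ∈ b ∧ ∀ n ∈ b, n ≤ p + 1 := by
  simp [psiLetter, sup_eq_succ_iff]

theorem bool_eq_of_false_iff {a b : Bool} (h : a = false ↔ b = false) : a = b := by
  cases a <;> cases b <;> simp_all

theorem sup_mem_Icc {H K : ℕ} {σ : Finset (Finset ℕ)} (h : IsSP H K σ) {b : Finset ℕ}
    (hb : b ∈ σ) : b.sup id ∈ b ∧ 1 ≤ b.sup id ∧ b.sup id ≤ H := by
  obtain ⟨h₁, -, h₃, -⟩ := isSP_iff.1 h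
  obtain ⟨n, hn, hs⟩ := Finset.exists_mem_eq_sup b (h₁ b hb) id
  have : b.sup id ∈ b := by rw [hs]; exact hn
  exact ⟨this, (h₃ _).1 ⟨b, hb, this⟩⟩

theorem sup_injOn {H K : ℕ} {σ : Finset (Finset ℕ)} (h : IsSP H K σ) :
    ∀ b ∈ σ, ∀ c ∈ σ, b.sup id = c.sup id → b = c := fun b hb c hc hbc =>
  (isSP_iff.1 h).2.1 b hb c hc _ (sup_mem_Icc h hb).1 (hbc ▸ (sup_mem_Icc h hc).1)

/-! ### Counting `∘`'s in `ψ(σ)` -/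

/-- The number of `∘`'s among the first `n` letters is the number of blocks with maximum at most
`n`, as distinct blocks have distinct maxima. -/
theorem count_psiWord {H K : ℕ} {σ : Finset (Finset ℕ)} (h : IsSP H K σ) (n : ℕ) :
    (psiWord n σ).count false = (σ.filter fun c => c.sup id < n + 1).card := by
  induction n with
  | zero =>
    symm
    rw [psiWord, List.range_zero, List.map_nil, List.count_nil, Finset.card_eq_zero,
      Finset.filter_eq_empty_iff]
    intro b hb
    have := (sup_mem_Icc h hb).2.1
    omega
  | succ n ih =>
    have hsplit : (σ.filter fun c => c.sup id < n + 1 + 1) =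
        (σ.filter fun c => c.sup id < n + 1) ∪ (σ.filter fun c => c.sup id = n + 1) := by
      ext b; simp only [Finset.mem_filter, Finset.mem_union]; grind
    rw [hsplit, Finset.card_union_of_disjoint
      (Finset.disjoint_filter.2 fun b _ h₁ h₂ => by omega), ← ih]
    simp only [psiWord, List.range_succ, List.map_append, List.count_append, List.map_cons,
      List.map_nil]
    congr 1
    by_cases hex : ∃ b ∈ σ, b.sup id = n + 1
    · obtain ⟨b, hb, hbn⟩ := hex
      have : (σ.filter fun c => c.sup id = n + 1) = {b} := by
        ext c
        simp only [Finset.mem_filter, Finset.mem_singleton]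
        exact ⟨fun hc => sup_injOn h c hc.1 b hb (hc.2.trans hbn.symm), by
          rintro rfl; exact ⟨hb, hbn⟩⟩
      rw [this]
      have : psiLetter σ n = false := if_pos ⟨b, hb, hbn⟩
      simp [this]
    · have h₁ : psiLetter σ n = true := if_neg hex
      have : (σ.filter fun c => c.sup id = n + 1) = ∅ :=
        Finset.filter_eq_empty_iff.2 fun c hc hcn => hex ⟨c, hc, hcn⟩
      simp [this, h₁]

/-- Only the block containing `h + 1` does not contribute a `∘` to the first `h` letters. -/
theorem count_psiWord_top {h k : ℕ} {σ : Finset (Finset ℕ)} (hσ : IsSP (h + 1) (k + 1) σ) :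
    (psiWord h σ).count false = k := by
  obtain ⟨b, hb, hbm⟩ := ((isSP_iff.1 hσ).2.2.1 (h + 1)).2 ⟨by omega, le_rfl⟩
  have hbs : b.sup id = h + 1 :=
    le_antisymm (sup_mem_Icc hσ hb).2.2 (Finset.le_sup (f := id) hbm)
  have : (σ.filter fun c => c.sup id < h + 1) = σ.erase b := by
    ext c
    simp only [Finset.mem_filter, Finset.mem_erase]
    constructor
    · rintro ⟨hc, hlt⟩
      exact ⟨by rintro rfl; omega, hc⟩
    · rintro ⟨hne, hc⟩
      refine ⟨hc, lt_of_le_of_ne (sup_mem_Icc hσ hc).2.2 fun he => hne ?_⟩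
      exact sup_injOn hσ c hc b hb (he.trans hbs.symm)
  rw [count_psiWord hσ, this, Finset.card_erase_of_mem hb, hσ.2.2.2, Nat.add_sub_cancel]

/-! ### The moves preserve set partitions -/

theorem mem_shift {b : Finset ℕ} (hb : 0 ∉ b) (n : ℕ) :
    n ∈ (b.erase 1).image (· - 1) ↔ 1 ≤ n ∧ n + 1 ∈ b := by
  simp only [Finset.mem_image, Finset.mem_erase]
  constructor
  · rintro ⟨m, ⟨h₁, h₂⟩, rfl⟩
    have : m ≠ 0 := fun h => hb (h ▸ h₂)
    exact ⟨by omega, by rwa [Nat.sub_add_cancel (by omega)]⟩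
  · rintro ⟨h₁, h₂⟩
    exact ⟨n + 1, ⟨by omega, h₂⟩, by omega⟩

theorem zero_notMem {H K : ℕ} {σ : Finset (Finset ℕ)} (h : IsSP H K σ) {b : Finset ℕ}
    (hb : b ∈ σ) : 0 ∉ b := fun h0 => by
  have := ((isSP_iff.1 h).2.2.1 0).1 ⟨b, hb, h0⟩
  omega

/-- The blocks of `σ↓` are the shifts of the blocks of `σ` other than `{1}`. -/
theorem downShift_eq {H K : ℕ} {σ : Finset (Finset ℕ)} (h : IsSP H K σ) :
    downShift σ = (σ.erase {1}).image fun b => (b.erase 1).image (· - 1) := by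
  have key : ∀ b ∈ σ, ((b.erase 1).image (· - 1) = ∅ ↔ b = {1}) := by
    intro b hb
    have hne := (isSP_iff.1 h).1 b hb
    rw [Finset.image_eq_empty, Finset.erase_eq_empty_iff]
    exact or_iff_right hne.ne_empty
  ext c
  simp only [downShift, Finset.mem_erase, Finset.mem_image]
  constructor
  · rintro ⟨hc, b, hb, rfl⟩
    exact ⟨b, ⟨fun h1 => hc ((key b hb).2 h1), hb⟩, rfl⟩
  · rintro ⟨b, ⟨hb1, hb⟩, rfl⟩
    exact ⟨fun hc => hb1 ((key b hb).1 hc), b, hb, rfl⟩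

/-- Removing `1` loses a block exactly when `{1}` is a block. -/
theorem isSP_downShift {h K : ℕ} {σ : Finset (Finset ℕ)} (hσ : IsSP (h + 1) K σ) :
    IsSP h (σ.erase {1}).card (downShift σ) := by
  obtain ⟨h₁, h₂, h₃, h₄⟩ := isSP_iff.1 hσ
  have hinj : ∀ b₁ ∈ σ, ∀ b₂ ∈ σ, ∀ n, n ∈ (b₁.erase 1).image (· - 1) →
      n ∈ (b₂.erase 1).image (· - 1) → b₁ = b₂ := by
    intro b₁ hb₁ b₂ hb₂ n hn₁ hn₂
    rw [mem_shift (zero_notMem hσ hb₁)] at hn₁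
    rw [mem_shift (zero_notMem hσ hb₂)] at hn₂
    exact h₂ b₁ hb₁ b₂ hb₂ _ hn₁.2 hn₂.2
  have hne : ∀ c ∈ downShift σ, c.Nonempty := fun c hc =>
    Finset.nonempty_iff_ne_empty.2 (Finset.ne_of_mem_erase hc)
  rw [isSP_iff]
  refine ⟨hne, ?_, ?_, ?_⟩
  · intro c₁ hc₁ c₂ hc₂ n hn₁ hn₂
    simp only [downShift, Finset.mem_erase, Finset.mem_image] at hc₁ hc₂
    obtain ⟨-, b₁, hb₁, rfl⟩ := hc₁
    obtain ⟨-, b₂, hb₂, rfl⟩ := hc₂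
    rw [hinj b₁ hb₁ b₂ hb₂ n (by simpa using hn₁) (by simpa using hn₂)]
  · intro n
    constructor
    · rintro ⟨c, hc, hn⟩
      obtain ⟨-, b, hb, rfl⟩ := by simpa only [downShift, Finset.mem_erase, Finset.mem_image] using hc
      rw [mem_shift (zero_notMem hσ hb)] at hn
      have := (h₃ (n + 1)).1 ⟨b, hb, hn.2⟩
      omega
    · rintro ⟨hn₁, hn₂⟩
      obtain ⟨b, hb, hnb⟩ := (h₃ (n + 1)).2 ⟨by omega, by omega⟩
      have hn := (mem_shift (zero_notMem hσ hb) n).2 ⟨hn₁, hnb⟩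
      exact ⟨_, Finset.mem_erase.2 ⟨Finset.ne_empty_of_mem hn, Finset.mem_image_of_mem _ hb⟩, hn⟩
  · rw [downShift_eq hσ]
    apply Finset.card_image_of_injOn
    intro b₁ hb₁ b₂ hb₂ hb
    have hb₁' := Finset.mem_of_mem_erase hb₁
    obtain ⟨n, hn⟩ := hne ((b₁.erase 1).image (· - 1)) (by
      rw [downShift_eq hσ]; exact Finset.mem_image_of_mem _ hb₁)
    exact hinj b₁ hb₁' b₂ (Finset.mem_of_mem_erase hb₂) n hn (by dsimp only at hb; rwa [← hb])

theorem isSP_insert {h K : ℕ} {τ : Finset (Finset ℕ)} (hτ : IsSP h K τ) :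
    IsSP (h + 1) (K + 1) (insert {h + 1} τ) := by
  obtain ⟨h₁, h₂, h₃, h₄⟩ := isSP_iff.1 hτ
  have hlt : ∀ b ∈ τ, h + 1 ∉ b := fun b hb hm => by
    have := (h₃ _).1 ⟨b, hb, hm⟩; omega
  rw [isSP_iff]
  refine ⟨?_, ?_, ?_, ?_⟩
  · intro b hb
    rcases Finset.mem_insert.1 hb with rfl | hb
    · simp
    · exact h₁ b hb
  · intro b₁ hb₁ b₂ hb₂ n hn₁ hn₂
    rcases Finset.mem_insert.1 hb₁ with rfl | hb₁ <;> rcases Finset.mem_insert.1 hb₂ with rfl | hb₂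
    · rfl
    · exact absurd (Finset.mem_singleton.1 hn₁ ▸ hn₂) (hlt _ hb₂)
    · exact absurd (Finset.mem_singleton.1 hn₂ ▸ hn₁) (hlt _ hb₁)
    · exact h₂ _ hb₁ _ hb₂ n hn₁ hn₂
  · intro n
    rw [Finset.exists_mem_insert, h₃, Finset.mem_singleton]
    omega
  · rw [Finset.card_insert_of_notMem fun hm => hlt _ hm (Finset.mem_singleton_self _), h₄]

/-- The number of blocks preceding `b` when blocks are ordered by their maxima. -/
def blockIdx (τ : Finset (Finset ℕ)) (b : Finset ℕ) : ℕ :=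
  (τ.filter fun c => c.sup id < b.sup id).card

theorem blockIdx_injOn {H K : ℕ} {τ : Finset (Finset ℕ)} (hτ : IsSP H K τ) :
    ∀ b ∈ τ, ∀ c ∈ τ, blockIdx τ b = blockIdx τ c → b = c := by
  have hlt : ∀ b ∈ τ, ∀ c ∈ τ, b.sup id < c.sup id → blockIdx τ b < blockIdx τ c := by
    intro b hb c hc hbc
    refine Finset.card_lt_card ((Finset.ssubset_iff_of_subset ?_).2 ⟨b, ?_, ?_⟩)
    · intro d hd
      rw [Finset.mem_filter] at hd ⊢
      exact ⟨hd.1, hd.2.trans hbc⟩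
    · exact Finset.mem_filter.2 ⟨hb, hbc⟩
    · exact fun hm => lt_irrefl _ (Finset.mem_filter.1 hm).2
  intro b hb c hc he
  apply sup_injOn hτ b hb c hc
  rcases lt_trichotomy (b.sup id) (c.sup id) with hl | hl | hl
  · have := hlt b hb c hc hl; omega
  · exact hl
  · have := hlt c hc b hb hl; omega

theorem exists_blockIdx {H K : ℕ} {τ : Finset (Finset ℕ)} (hτ : IsSP H K τ) {i : ℕ} (hi : i < K) :
    ∃ b ∈ τ, blockIdx τ b = i := by
  -- An injective map from the `K` blocks into `{0, …, K - 1}` is onto.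
  have himg : τ.image (blockIdx τ) = Finset.range K := by
    apply Finset.eq_of_subset_of_card_le
    · intro j hj
      obtain ⟨b, hb, rfl⟩ := Finset.mem_image.1 hj
      rw [Finset.mem_range, ← hτ.2.2.2]
      refine Finset.card_lt_card ((Finset.ssubset_iff_of_subset (Finset.filter_subset _ _)).2
        ⟨b, hb, fun hm => lt_irrefl _ (Finset.mem_filter.1 hm).2⟩)
    · rw [Finset.card_range, Finset.card_image_of_injOn fun b hb c hc => blockIdx_injOn hτ b hb c hc,
        hτ.2.2.2]
  have : i ∈ τ.image (blockIdx τ) := himg ▸ Finset.mem_range.2 hi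
  exact Finset.mem_image.1 this

theorem isSP_insertIntoBlock {h K : ℕ} {τ : Finset (Finset ℕ)} (hτ : IsSP h K τ) {i : ℕ}
    (hi : i < K) : IsSP (h + 1) K (insertIntoBlock (h + 1) i τ) := by
  obtain ⟨h₁, h₂, h₃, h₄⟩ := isSP_iff.1 hτ
  have hlt : ∀ b ∈ τ, h + 1 ∉ b := fun b hb hm => by
    have := (h₃ _).1 ⟨b, hb, hm⟩; omega
  set f : Finset ℕ → Finset ℕ := fun b => if blockIdx τ b = i then insert (h + 1) b else b with hf
  have hI : insertIntoBlock (h + 1) i τ = τ.image f := rfl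
  have hmem : ∀ b n, n ∈ f b ↔ n ∈ b ∨ (n = h + 1 ∧ blockIdx τ b = i) := by
    intro b n
    simp only [hf]
    split_ifs with hb <;> simp [hb, or_comm]
  have hinj : ∀ b₁ ∈ τ, ∀ b₂ ∈ τ, ∀ n, n ∈ f b₁ → n ∈ f b₂ → b₁ = b₂ := by
    intro b₁ hb₁ b₂ hb₂ n hn₁ hn₂
    rw [hmem] at hn₁ hn₂
    rcases hn₁ with hn₁ | ⟨rfl, hi₁⟩ <;> rcases hn₂ with hn₂ | ⟨he, hi₂⟩
    · exact h₂ _ hb₁ _ hb₂ n hn₁ hn₂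
    · exact absurd (he ▸ hn₁) (hlt _ hb₁)
    · exact absurd hn₂ (hlt _ hb₂)
    · exact blockIdx_injOn hτ _ hb₁ _ hb₂ (hi₁.trans hi₂.symm)
  have hne : ∀ b ∈ τ, (f b).Nonempty := fun b hb =>
    (h₁ b hb).mono fun n hn => (hmem b n).2 (Or.inl hn)
  rw [hI, isSP_iff]
  refine ⟨?_, ?_, ?_, ?_⟩
  · simpa only [Finset.forall_mem_image] using hne
  · simp only [Finset.forall_mem_image]
    intro b₁ hb₁ b₂ hb₂ n hn₁ hn₂
    rw [hinj b₁ hb₁ b₂ hb₂ n hn₁ hn₂]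
  · intro n
    simp only [Finset.exists_mem_image, hmem]
    constructor
    · rintro ⟨b, hb, hn | ⟨rfl, -⟩⟩
      · have := (h₃ n).1 ⟨b, hb, hn⟩; omega
      · omega
    · rintro ⟨hn₁, hn₂⟩
      by_cases hn : n = h + 1
      · obtain ⟨b, hb, hbi⟩ := exists_blockIdx hτ hi
        exact ⟨b, hb, Or.inr ⟨hn, hbi⟩⟩
      · obtain ⟨b, hb, hnb⟩ := (h₃ n).2 ⟨hn₁, by omega⟩
        exact ⟨b, hb, Or.inl hnb⟩
  · rw [Finset.card_image_of_injOn, h₄]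
    intro b₁ hb₁ b₂ hb₂ he
    obtain ⟨n, hn⟩ := hne b₁ hb₁
    exact hinj b₁ hb₁ b₂ hb₂ n hn (he ▸ hn)

/-! ### The effect of the moves on words -/

theorem psiLetter_downShift {H K : ℕ} {σ : Finset (Finset ℕ)} (hσ : IsSP H K σ) (p : ℕ) :
    psiLetter (downShift σ) p = psiLetter σ (p + 1) := by
  apply bool_eq_of_false_iff
  rw [psiLetter_eq_false, psiLetter_eq_false]
  constructor
  · rintro ⟨c, hc, hp, hmax⟩
    obtain ⟨-, b, hb, rfl⟩ := by simpa only [downShift, Finset.mem_erase, Finset.mem_image] using hc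
    have hm := mem_shift (zero_notMem hσ hb)
    refine ⟨b, hb, ((hm _).1 hp).2, fun n hn => ?_⟩
    rcases Nat.lt_or_ge n 2 with h2 | h2
    · omega
    · have := hmax (n - 1) ((hm _).2 ⟨by omega, by rwa [Nat.sub_add_cancel (by omega)]⟩)
      omega
  · rintro ⟨b, hb, hp, hmax⟩
    have hm := mem_shift (zero_notMem hσ hb)
    have hpm := (hm (p + 1)).2 ⟨by omega, hp⟩
    refine ⟨_, Finset.mem_erase.2 ⟨Finset.ne_empty_of_mem hpm, Finset.mem_image_of_mem _ hb⟩, hpm,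
      fun n hn => ?_⟩
    have := hmax _ ((hm n).1 hn).2
    omega

/-- `1` is the maximum of its block exactly when that block is `{1}`. -/
theorem psiLetter_zero {H K : ℕ} {σ : Finset (Finset ℕ)} (hσ : IsSP H K σ) :
    psiLetter σ 0 = false ↔ ({1} : Finset ℕ) ∈ σ := by
  rw [psiLetter_eq_false]
  constructor
  · rintro ⟨b, hb, h1, hmax⟩
    have : b = {1} := by
      ext n
      rw [Finset.mem_singleton]
      constructor
      · intro hn
        have := hmax n hn
        have : n ≠ 0 := fun h => zero_notMem hσ hb (h ▸ hn)
        omega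
      · rintro rfl; exact h1
    exact this ▸ hb
  · intro h
    exact ⟨{1}, h, by simp, by simp⟩

/-- Shifting deletes the first letter and appends a `∘`, the top element of `σ` being the maximum of
its block. -/
theorem psiWord_head_tail {n K : ℕ} {σ : Finset (Finset ℕ)} (hσ : IsSP (n + 2) K σ) :
    ∃ rest, psiWord (n + 1) σ = psiLetter σ 0 :: rest ∧
      psiWord (n + 1) (downShift σ) = rest ++ [false] := by
  refine ⟨(List.range n).map (psiLetter (downShift σ)), ?_, ?_⟩
  · rw [psiWord, List.range_succ_eq_map, List.map_cons, List.map_map]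
    congr 1
    exact List.map_congr_left fun p _ => (psiLetter_downShift hσ p).symm
  · rw [psiWord, List.range_succ, List.map_append, List.map_cons, List.map_nil]
    congr 2
    rw [psiLetter_downShift hσ, psiLetter_eq_false]
    obtain ⟨b, hb, hm⟩ := ((isSP_iff.1 hσ).2.2.1 (n + 2)).2 ⟨by omega, le_rfl⟩
    exact ⟨b, hb, hm, fun m hmb => (((isSP_iff.1 hσ).2.2.1 m).1 ⟨b, hb, hmb⟩).2⟩

theorem psiWord_insert (h : ℕ) (τ : Finset (Finset ℕ)) :
    psiWord h (insert {h + 1} τ) = psiWord h τ := by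
  apply List.map_congr_left
  intro p hp
  rw [List.mem_range] at hp
  apply bool_eq_of_false_iff
  rw [psiLetter_eq_false, psiLetter_eq_false, Finset.exists_mem_insert, or_iff_right]
  rw [Finset.mem_singleton]
  omega

/-- `T_i` changes the letter at position `p` exactly when it is a `∘` preceded by `i` others. -/
theorem fillAt_getElem? (i : ℕ) (l : List Bool) (p : ℕ) :
    (fillAt i l)[p]? = l[p]?.map fun a => a || ((l.take p).count false == i) := by
  induction l generalizing i p with
  | nil => simp [fillAt]
  | cons a l ih =>
    cases a <;> cases i <;> cases p <;> simp [fillAt, ih]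

/-- Inserting `h + 1` removes from the block maxima at most `h` the one that has `i` smaller ones,
which is the position of the `(i+1)`-th `∘`. -/
theorem psiWord_insertIntoBlock {h K : ℕ} {τ : Finset (Finset ℕ)} (hτ : IsSP h K τ) (i : ℕ) :
    psiWord h (insertIntoBlock (h + 1) i τ) = fillAt i (psiWord h τ) := by
  apply List.ext_getElem?
  intro p
  rw [fillAt_getElem?]
  by_cases hp : p < h
  · have htake : (psiWord h τ).take p = psiWord p τ := by
      rw [psiWord, ← List.map_take, List.take_range, min_eq_left hp.le, psiWord]
    rw [htake, count_psiWord hτ]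
    simp only [psiWord, List.getElem?_map, List.getElem?_range hp, Option.map_some]
    congr 1
    apply bool_eq_of_false_iff
    rw [Bool.or_eq_false_iff, beq_eq_false_iff_ne]
    simp only [psiLetter, ite_eq_left_iff, Bool.true_eq_false, imp_false, not_not,
      insertIntoBlock, Finset.exists_mem_image]
    constructor
    · rintro ⟨b, hb, hs⟩
      split_ifs at hs with hbi
      · rw [Finset.sup_insert] at hs
        have : h + 1 ≤ p + 1 := hs ▸ le_sup_left (a := id (h + 1))
        omega
      · exact ⟨⟨b, hb, hs⟩, hs ▸ hbi⟩
    · rintro ⟨⟨b, hb, hs⟩, hne⟩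
      rw [← hs] at hne
      exact ⟨b, hb, by rw [if_neg hne, hs]⟩
  · have : h ≤ p := not_lt.1 hp
    rw [List.getElem?_eq_none (by simpa [psiWord] using this),
      List.getElem?_eq_none (l := psiWord h τ) (by simpa [psiWord] using this), Option.map_none]

/-! ### The matrix products -/

theorem ofFn_psiLetter (h : ℕ) (σ : Finset (Finset ℕ)) :
    List.ofFn (fun i : Fin h => psiLetter σ (i : ℕ)) = psiWord h σ := by
  apply List.ext_getElem <;> simp [psiWord]

theorem psi_eq_iff (h : ℕ) (σ : Finset (Finset ℕ)) (B : Fin h → Bool) :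
    (fun i : Fin h => psiLetter σ (i : ℕ)) = B ↔ List.ofFn B = psiWord h σ := by
  rw [← ofFn_psiLetter, List.ofFn_inj, eq_comm]

/-- Summing a function against the indicator of a single set partition. -/
theorem sum_indicator {H K : ℕ} {τ₀ : Finset (Finset ℕ)} (h₀ : IsSP H K τ₀) (c : ℝ)
    (g : Finset (Finset ℕ) → ℝ) :
    ∑ τ : {σ // σ ∈ spFinset H K}, (if τ.1 = τ₀ then c else 0) * g τ.1 = c * g τ₀ := by
  rw [Finset.sum_eq_single ⟨τ₀, mem_spFinset.2 h₀⟩]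
  · simp
  · intro τ _ hne
    rw [if_neg fun h => hne (Subtype.ext h), zero_mul]
  · simp

/-- the intertwining relation `P̃ Ψ = Ψ P`, where `Ψ` is the 0/1
matrix with `Ψ_{σ,B} = 1` iff `ψ(σ) = B`, `P̃` is the enriched transition matrix on
`S(h+1,k+1)` and `P` the MJMC transition matrix on `St_{h,k}`. -/
theorem enriched_intertwining (h k : ℕ) (hk : k ≤ h) (x : ℕ → ℝ)
    (hx : ∀ i, 0 ≤ x i) (hsum : ∑ i ∈ Finset.range (k + 1), x i = 1) :
    (Matrix.of fun σ τ : {σ // σ ∈ spFinset (h + 1) (k + 1)} =>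
        enrichedP h k x σ.1 τ.1) *
      (Matrix.of fun (σ : {σ // σ ∈ spFinset (h + 1) (k + 1)})
          (B : {B // B ∈ stWords h k}) =>
        if (fun i : Fin h => psiLetter σ.1 (i : ℕ)) = B.1 then (1 : ℝ) else 0)
    = (Matrix.of fun (σ : {σ // σ ∈ spFinset (h + 1) (k + 1)})
          (B : {B // B ∈ stWords h k}) =>
        if (fun i : Fin h => psiLetter σ.1 (i : ℕ)) = B.1 then (1 : ℝ) else 0) *
      (Matrix.of fun A B : {B // B ∈ stWords h k} =>
        mjmcP k x (List.ofFn A.1) (List.ofFn B.1)) := by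
  ext σ B
  obtain ⟨σ, hσ'⟩ := σ
  have hσ := mem_spFinset.1 hσ'
  simp only [Matrix.mul_apply, Matrix.of_apply]
  have hmem : (fun i : Fin h => psiLetter σ (i : ℕ)) ∈ stWords h k := by
    rw [stWords, Finset.mem_filter, ofFn_psiLetter]
    exact ⟨Finset.mem_univ _, count_psiWord_top hσ⟩
  -- The right-hand side is the single term `P(ψ(σ), B)`.
  have hR : ∑ A : {B // B ∈ stWords h k},
      (if (fun i : Fin h => psiLetter σ (i : ℕ)) = A.1 then (1 : ℝ) else 0) *
        mjmcP k x (List.ofFn A.1) (List.ofFn B.1) =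
      mjmcP k x (psiWord h σ) (List.ofFn B.1) := by
    rw [Finset.sum_eq_single ⟨_, hmem⟩]
    · rw [if_pos rfl, one_mul, ofFn_psiLetter]
    · intro A _ hne
      rw [if_neg fun h => hne (Subtype.ext h.symm), zero_mul]
    · simp
  rw [hR]
  simp only [psi_eq_iff]
  have hd := isSP_downShift hσ
  by_cases h1 : ({1} : Finset ℕ) ∈ σ
  · rw [Finset.card_erase_of_mem h1, hσ.2.2.2, Nat.add_sub_cancel] at hd
    simp only [enrichedP, if_pos h1]
    rw [sum_indicator (isSP_insert hd) 1
      (fun τ => if List.ofFn B.1 = psiWord h τ then (1 : ℝ) else 0), one_mul, psiWord_insert]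
    cases h with
    | zero => simp [psiWord, mjmcP]
    | succ n =>
      obtain ⟨rest, hr₁, hr₂⟩ := psiWord_head_tail hσ
      rw [hr₁, hr₂, (psiLetter_zero hσ).2 h1, mjmcP]
  · rw [Finset.erase_eq_of_notMem h1, hσ.2.2.2] at hd
    simp only [enrichedP, if_neg h1, Finset.sum_mul]
    rw [Finset.sum_comm]
    have hterm : ∀ i ∈ Finset.range (k + 1),
        ∑ τ : {σ // σ ∈ spFinset (h + 1) (k + 1)},
          (if τ.1 = insertIntoBlock (h + 1) i (downShift σ) then x i else 0) *
            (if List.ofFn B.1 = psiWord h τ.1 then (1 : ℝ) else 0) =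
        if List.ofFn B.1 = fillAt i (psiWord h (downShift σ)) then x i else 0 := by
      intro i hi
      rw [sum_indicator (isSP_insertIntoBlock hd (Finset.mem_range.1 hi)) (x i)
        (fun τ => if List.ofFn B.1 = psiWord h τ then (1 : ℝ) else 0),
        psiWord_insertIntoBlock hd, mul_ite, mul_one, mul_zero]
    rw [Finset.sum_congr rfl hterm]
    cases h with
    | zero =>
      -- `σ↓` would be a partition of the empty set into `k + 1 > 0` nonempty blocks.
      obtain ⟨b, hb, -⟩ := exists_blockIdx hd (Nat.succ_pos k)
      have := sup_mem_Icc hd hb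
      omega
    | succ n =>
      obtain ⟨rest, hr₁, hr₂⟩ := psiWord_head_tail hσ
      have h0 : psiLetter σ 0 = true := by
        rw [← Bool.not_eq_false, psiLetter_zero hσ]; exact h1
      rw [hr₁, hr₂, h0, mjmcP]
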